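/- Let S be a factorizable inverse monoid with semilattice of idempotents E and group of units G such that the natural connection θ is a dual isomorphism from E onto a sublattice of L(G). If e₁, e, f₁, f are idempotents of S such that e₁ is central in e↑ and f₁ is central in f↑ (and the relevant joins exist), then e₁(e∨f₁) is central in (e₁(e∨f))↑, f₁(e₁∨f) is central in (f₁(e∨f))↑, and the monoids F_{e₁(e∨f), e₁(e∨f₁)} and F_{f₁(e∨f), f₁(e₁∨f)} are isomorphic. -/

import Mathlib

/-- An inverse monoid: a monoid in which every element `a` has an inverse `a⁻¹`
satisfying `a * a⁻¹ * a = a` and `a⁻¹ * a * a⁻¹ = a⁻¹`, and this inverse is unique. -/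
class InverseMonoid (S : Type*) extends Monoid S, Inv S where
  mul_inv_mul : ∀ a : S, a * a⁻¹ * a = a
  inv_mul_inv : ∀ a : S, a⁻¹ * a * a⁻¹ = a⁻¹
  inv_unique : ∀ a b : S, a * b * a = a → b * a * b = b → b = a⁻¹

/-- An inverse monoid with a (two-sided absorbing) zero element. -/
class InverseMonoidWithZero (S : Type*) extends InverseMonoid S, Zero S where
  zero_mul : ∀ a : S, 0 * a = 0
  mul_zero : ∀ a : S, a * 0 = 0

/-- The natural partial order on an inverse monoid: `a ≤ b` iff `a = e * b`
for some idempotent `e`. -/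
def NatLe {S : Type*} [Monoid S] (a b : S) : Prop :=
  ∃ e : S, IsIdempotentElem e ∧ a = e * b

/-- The filter `e↑ = {s | e ≤ s}` generated by `e`. -/
def upfilter {S : Type*} [Monoid S] (e : S) : Set S := {s | NatLe e s}

/-- `c` is central in (a subset) `T`: it belongs to `T` and commutes with all elements of `T`. -/
def CentralIn {S : Type*} [Mul S] (T : Set S) (c : S) : Prop :=
  c ∈ T ∧ ∀ s ∈ T, c * s = s * c

/-- A monoid is factorizable if every element is a product of an idempotent and a unit. -/
def Factorizable (S : Type*) [Monoid S] : Prop :=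
  ∀ s : S, ∃ e g : S, IsIdempotentElem e ∧ IsUnit g ∧ s = e * g

/-- The natural connection `θ`: for an (idempotent) `e`, the subgroup
`eθ = {g ∈ G : e * g = e}` of the group of units. -/
def natconn {S : Type*} [Monoid S] (e : S) : Subgroup Sˣ where
  carrier := {g : Sˣ | e * (g : S) = e}
  one_mem' := by simp
  mul_mem' := by
    intro a b ha hb
    simp only [Set.mem_setOf_eq, Units.val_mul] at *
    rw [← mul_assoc, ha, hb]
  inv_mem' := by
    intro a ha
    simp only [Set.mem_setOf_eq] at *
    nth_rewrite 1 [← ha]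
    rw [mul_assoc, ← Units.val_mul, mul_inv_cancel, Units.val_one, mul_one]

/-- The natural connection is a dual isomorphism from the idempotents onto a
sublattice of the lattice of subgroups of the group of units: it is injective on
idempotents, order-reversing in both directions, and its image is closed under
joins and meets of subgroups. -/
def NatconnDualIso (S : Type*) [Monoid S] : Prop :=
  (∀ e f : S, IsIdempotentElem e → IsIdempotentElem f → natconn e = natconn f → e = f) ∧
  (∀ e f : S, IsIdempotentElem e → IsIdempotentElem f →
    (NatLe e f ↔ natconn f ≤ natconn e)) ∧
  (∀ e f : S, IsIdempotentElem e → IsIdempotentElem f →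
    (∃ h : S, IsIdempotentElem h ∧ natconn h = natconn e ⊔ natconn f) ∧
    (∃ h : S, IsIdempotentElem h ∧ natconn h = natconn e ⊓ natconn f))

/-- `j` is the join (least upper bound) of `e` and `f` with respect to the natural order. -/
def IsNatJoin {S : Type*} [Monoid S] (e f j : S) : Prop :=
  NatLe e j ∧ NatLe f j ∧ ∀ x : S, NatLe e x → NatLe f x → NatLe j x

/-- `F_{e,f} = f · e↑`. -/
def Fef {S : Type*} [Monoid S] (e f : S) : Set S := (f * ·) '' upfilter e

/-- `UF_{e,f}`: the group of units of the monoid `F_{e,f}` (whose identity is `f`). -/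
def UFef {S : Type*} [Monoid S] (e f : S) : Set S :=
  {x ∈ Fef e f | ∃ y ∈ Fef e f, x * y = f ∧ y * x = f}

/-- The centre of a subset `T`. -/
def ZIn {S : Type*} [Mul S] (T : Set S) : Set S := {x ∈ T | ∀ y ∈ T, x * y = y * x}

/-- Two subsets are isomorphic as semigroups (with the induced multiplication). -/
def SubIso {S : Type*} [Mul S] (A B : Set S) : Prop :=
  ∃ φ : S → S, Set.BijOn φ A B ∧ ∀ a ∈ A, ∀ b ∈ A, φ (a * b) = φ a * φ b

/-- A subcentral idempotent series between `0` and `a`. -/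
def IsSubcentralSeriesBetween {S : Type*} [Monoid S] [Zero S] (n : ℕ) (c : ℕ → S) (a : S) :
    Prop :=
  c 0 = 0 ∧ c n = a ∧ (∀ i ≤ n, IsIdempotentElem (c i)) ∧
    ∀ i < n, CentralIn (upfilter (c i)) (c (i + 1))

/-- A subcentral idempotent series of `S` (between `0` and `1`). -/
def IsSubcentralSeries {S : Type*} [Monoid S] [Zero S] (n : ℕ) (c : ℕ → S) : Prop :=
  IsSubcentralSeriesBetween n c 1

/-- A central idempotent series of `S`. -/
def IsCentralSeries {S : Type*} [Monoid S] [Zero S] (n : ℕ) (c : ℕ → S) : Prop :=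
  c 0 = 0 ∧ c n = 1 ∧ (∀ i ≤ n, IsIdempotentElem (c i)) ∧
    (∀ i < n, NatLe (c i) (c (i + 1))) ∧
    ∀ i < n, CentralIn Set.univ (c (i + 1))

/-- A subcentral idempotent: one occurring in some subcentral idempotent series of `S`. -/
def IsSubcentralIdem {S : Type*} [Monoid S] [Zero S] (e : S) : Prop :=
  ∃ (n : ℕ) (c : ℕ → S), IsSubcentralSeries n c ∧ ∃ i ≤ n, c i = e

/-- A `G`-nilpotent series: a chain of central idempotents from `0` to `1` with
`F_{eᵢ,eᵢ₊₁} ⊆ Z(F_{0,eᵢ₊₁})`. -/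
def GNilpotentSeries {S : Type*} [Monoid S] [Zero S] (n : ℕ) (c : ℕ → S) : Prop :=
  c 0 = 0 ∧ c n = 1 ∧ (∀ i ≤ n, IsIdempotentElem (c i) ∧ CentralIn Set.univ (c i)) ∧
    (∀ i < n, NatLe (c i) (c (i + 1))) ∧
    ∀ i < n, Fef (c i) (c (i + 1)) ⊆ ZIn (Fef 0 (c (i + 1)))

/-- A `G`-solvable series: a chain of central idempotents from `0` to `1` with
each `F_{eᵢ,eᵢ₊₁}` commutative. -/
def GSolvableSeries {S : Type*} [Monoid S] [Zero S] (n : ℕ) (c : ℕ → S) : Prop :=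
  c 0 = 0 ∧ c n = 1 ∧ (∀ i ≤ n, IsIdempotentElem (c i) ∧ CentralIn Set.univ (c i)) ∧
    (∀ i < n, NatLe (c i) (c (i + 1))) ∧
    ∀ i < n, ∀ x ∈ Fef (c i) (c (i + 1)), ∀ y ∈ Fef (c i) (c (i + 1)), x * y = y * x

/-- `S` is `G`-nilpotent. -/
def GNilpotent (S : Type*) [Monoid S] [Zero S] : Prop :=
  ∃ (n : ℕ) (c : ℕ → S), GNilpotentSeries n c

/-- `S` is `G`-solvable. -/
def GSolvable (S : Type*) [Monoid S] [Zero S] : Prop :=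
  ∃ (n : ℕ) (c : ℕ → S), GSolvableSeries n c

/-- Two idempotent series are isomorphic: same length, and a one-to-one correspondence
between their factors under which corresponding factors are isomorphic. -/
def SeriesIso {S : Type*} [Monoid S] (n : ℕ) (c : ℕ → S) (n' : ℕ) (d : ℕ → S) : Prop :=
  n = n' ∧ ∃ σ : ℕ → ℕ, Set.BijOn σ {i | i < n} {i | i < n'} ∧
    ∀ i < n, SubIso (Fef (c i) (c (i + 1))) (Fef (d (σ i)) (d (σ i + 1)))

/-- A composition series (for a kind `P` of series): it has no repeated terms, and any
refinement of it (of the same kind) only repeats its terms. -/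
def IsCompositionOf {S : Type*} (P : ℕ → (ℕ → S) → Prop) (n : ℕ) (c : ℕ → S) : Prop :=
  P n c ∧ (∀ i ≤ n, ∀ j ≤ n, c i = c j → i = j) ∧
    ∀ (m : ℕ) (d : ℕ → S), P m d → (∀ i ≤ n, ∃ j ≤ m, d j = c i) →
      ∀ j ≤ m, ∃ i ≤ n, d j = c i

/-!
For an idempotent `e` write `eθ` for `natconn e`. Since `S` is factorizable, an idempotent `c ≥ e`
is central in `e↑` exactly when it commutes with every unit in `eθ`, and then `cθ` is normalised by
`eθ`; an element of `F_{e,c}` is a product `m * g` with `e ≤ m ≤ c` idempotent and `g ∈ eθ`, so it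
is a coset of `mθ` in `eθ`. As `θ` turns products into joins of subgroups and joins into
intersections, the theorem is Zassenhaus' butterfly lemma for `e₁θ ⊴ eθ` and `f₁θ ⊴ fθ`: both
factors are isomorphic to `F_{e∨f, (e∨f₁)(e₁∨f)}`, through multiplication by `e₁` and by `f₁`, by
the monoid version of the second isomorphism theorem.
-/

namespace InverseMonoid

variable {S : Type*} [InverseMonoid S] {e f : S}

lemma inv_eq_self_of_isIdempotentElem (he : IsIdempotentElem e) : e⁻¹ = e :=
  (inv_unique e e (by rw [he.eq, he.eq]) (by rw [he.eq, he.eq])).symm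

lemma isIdempotentElem_mul (he : IsIdempotentElem e) (hf : IsIdempotentElem f) :
    IsIdempotentElem (e * f) := by
  -- `f * (e * f)⁻¹ * e` is an idempotent inverse of `e * f`, hence equal to it.
  have hy : IsIdempotentElem (f * (e * f)⁻¹ * e) := by
    calc f * (e * f)⁻¹ * e * (f * (e * f)⁻¹ * e)
        = f * ((e * f)⁻¹ * (e * f) * (e * f)⁻¹) * e := by simp only [mul_assoc]
      _ = f * (e * f)⁻¹ * e := by rw [inv_mul_inv]
  have heq : e * f = (f * (e * f)⁻¹ * e)⁻¹ := by
    apply InverseMonoid.inv_unique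
    · calc f * (e * f)⁻¹ * e * (e * f) * (f * (e * f)⁻¹ * e)
          = f * (e * f)⁻¹ * (e * e) * (f * f) * (e * f)⁻¹ * e := by simp only [mul_assoc]
        _ = f * ((e * f)⁻¹ * (e * f) * (e * f)⁻¹) * e := by
          rw [he.eq, hf.eq]; simp only [mul_assoc]
        _ = f * (e * f)⁻¹ * e := by rw [inv_mul_inv]
    · calc e * f * (f * (e * f)⁻¹ * e) * (e * f)
          = e * (f * f) * (e * f)⁻¹ * (e * e) * f := by simp only [mul_assoc]
        _ = e * f * (e * f)⁻¹ * (e * f) := by rw [he.eq, hf.eq]; simp only [mul_assoc]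
        _ = e * f := mul_inv_mul _
  rw [heq, inv_eq_self_of_isIdempotentElem hy]
  exact hy

lemma commute_of_isIdempotentElem (he : IsIdempotentElem e) (hf : IsIdempotentElem f) :
    Commute e f := by
  have hswap : ∀ {a b : S}, IsIdempotentElem a → IsIdempotentElem b →
      a * b * (b * a) * (a * b) = a * b := fun {a b} ha hb => by
    calc a * b * (b * a) * (a * b) = a * (b * b) * (a * a) * b := by simp only [mul_assoc]
      _ = a * b * (a * b) := by rw [ha.eq, hb.eq]; simp only [mul_assoc]
      _ = a * b := isIdempotentElem_mul ha hb
  have hinv : f * e = (e * f)⁻¹ := inv_unique _ _ (hswap he hf) (hswap hf he)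
  exact (hinv.trans (inv_eq_self_of_isIdempotentElem (isIdempotentElem_mul he hf))).symm

end InverseMonoid

open InverseMonoid (inv_eq_self_of_isIdempotentElem isIdempotentElem_mul
  commute_of_isIdempotentElem)

section Monoid

variable {M : Type*} [Monoid M] {e f x : M} {g : Mˣ}

lemma mem_natconn : g ∈ natconn e ↔ e * (g : M) = e := Iff.rfl

lemma natconn_anti (h : NatLe e f) : natconn f ≤ natconn e := by
  obtain ⟨x, -, rfl⟩ := h
  intro g hg
  rw [mem_natconn, mul_assoc, hg]

/-- The subgroup of the units that commute with `x`. For idempotent `e`, the condition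
`natconn e ≤ unitCentralizer c` expresses that `c` is central in `e↑`. -/
def unitCentralizer (x : M) : Subgroup Mˣ := (Submonoid.centralizer {x}).units

lemma mem_unitCentralizer : g ∈ unitCentralizer x ↔ Commute x (g : M) := by
  simp only [unitCentralizer, Submonoid.mem_units_iff, Submonoid.mem_centralizer_iff,
    Set.mem_singleton_iff, forall_eq]
  exact ⟨And.left, fun h => ⟨h, Commute.units_inv_right h⟩⟩

lemma unitCentralizer_inf_le_mul (x y : M) :
    unitCentralizer x ⊓ unitCentralizer y ≤ unitCentralizer (x * y) := fun _ hg =>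
  mem_unitCentralizer.2 ((mem_unitCentralizer.1 hg.1).mul_left (mem_unitCentralizer.1 hg.2))

lemma mem_unitCentralizer_iff_conj_eq : g ∈ unitCentralizer x ↔ g * x * (↑g⁻¹ : M) = x := by
  rw [mem_unitCentralizer, Units.mul_inv_eq_iff_eq_mul, commute_iff_eq, eq_comm]

lemma unitCentralizer_le_normalizer_natconn (e : M) :
    unitCentralizer e ≤ Subgroup.normalizer (natconn e) := by
  refine Subgroup.le_normalizer_iff.2 fun g hg a ha => ?_
  have hcomm : e * (g : M) = g * e := mem_unitCentralizer.1 hg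
  calc e * ((g * a * g⁻¹ : Mˣ) : M) = e * g * a * (↑g⁻¹ : M) := by
        simp only [Units.val_mul, mul_assoc]
    _ = g * (e * a) * (↑g⁻¹ : M) := by rw [hcomm]; simp only [mul_assoc]
    _ = e := by rw [mem_natconn.1 ha, ← hcomm, Units.mul_inv_cancel_right]

lemma isIdempotentElem_conj (he : IsIdempotentElem e) (g : Mˣ) :
    IsIdempotentElem (g * e * (↑g⁻¹ : M)) := by
  calc g * e * (↑g⁻¹ : M) * (g * e * (↑g⁻¹ : M)) = g * (e * e) * (↑g⁻¹ : M) := by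
        simp only [mul_assoc, Units.inv_mul_cancel_left]
    _ = g * e * (↑g⁻¹ : M) := by rw [he.eq]

lemma NatLe.conj (h : NatLe e f) (g : Mˣ) :
    NatLe (g * e * (↑g⁻¹ : M)) (g * f * (↑g⁻¹ : M)) := by
  obtain ⟨x, hx, rfl⟩ := h
  exact ⟨g * x * (↑g⁻¹ : M), isIdempotentElem_conj hx g, by
    simp only [mul_assoc, Units.inv_mul_cancel_left]⟩

namespace IsNatJoin

variable {j : M}

lemma symm (h : IsNatJoin e f j) : IsNatJoin f e j :=
  ⟨h.2.1, h.1, fun x hf he => h.2.2 x he hf⟩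

lemma isIdempotentElem (he : IsIdempotentElem e) (hf : IsIdempotentElem f)
    (hj : IsNatJoin e f j) : IsIdempotentElem j := by
  obtain ⟨x, hx, hjx⟩ := hj.2.2 1 ⟨e, he, (mul_one e).symm⟩ ⟨f, hf, (mul_one f).symm⟩
  rwa [hjx, mul_one]

lemma natLe_conj (hj : IsNatJoin e f j) (he : g ∈ unitCentralizer e)
    (hf : g ∈ unitCentralizer f) : NatLe j (g * j * (↑g⁻¹ : M)) := by
  have hej := hj.1.conj g
  have hfj := hj.2.1.conj g
  rw [mem_unitCentralizer_iff_conj_eq.1 he] at hej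
  rw [mem_unitCentralizer_iff_conj_eq.1 hf] at hfj
  exact hj.2.2 _ hej hfj

end IsNatJoin

end Monoid

section InverseMonoid

variable {S : Type*} [InverseMonoid S] {e f j p q s t x y : S} {g h : Sˣ}

lemma natLe_iff_mul_eq (hp : IsIdempotentElem p) : NatLe p s ↔ p * s = p := by
  refine ⟨?_, fun h => ⟨p, hp, h.symm⟩⟩
  rintro ⟨x, hx, hps⟩
  have hxp : x * p = p := by rw [hps, ← mul_assoc, hx.eq]
  calc p * s = x * p * s := by rw [hxp]
    _ = p * (x * s) := by rw [(commute_of_isIdempotentElem hx hp).eq, mul_assoc]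
    _ = p := by rw [← hps, hp.eq]

lemma NatLe.mul (hp : IsIdempotentElem p) (hps : NatLe p s) (hpt : NatLe p t) :
    NatLe p (s * t) := by
  rw [natLe_iff_mul_eq hp] at hps hpt ⊢
  rw [← mul_assoc, hps, hpt]

lemma NatLe.antisymm (he : IsIdempotentElem e) (hf : IsIdempotentElem f) (hef : NatLe e f)
    (hfe : NatLe f e) : e = f := by
  rw [← (natLe_iff_mul_eq he).1 hef, (commute_of_isIdempotentElem he hf).eq,
    (natLe_iff_mul_eq hf).1 hfe]

lemma natconn_le_unitCentralizer (he : IsIdempotentElem e) : natconn e ≤ unitCentralizer e := by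
  intro g hg
  rw [mem_natconn] at hg
  have hge : (g : S) * e = e⁻¹ := by
    apply InverseMonoid.inv_unique
    · rw [← mul_assoc, hg, he.eq, he.eq]
    · calc g * e * e * (g * e) = g * (e * e) * g * e := by simp only [mul_assoc]
        _ = g * (e * g) * e := by rw [he.eq]; simp only [mul_assoc]
        _ = g * e := by rw [hg, mul_assoc, he.eq]
  rw [inv_eq_self_of_isIdempotentElem he] at hge
  exact mem_unitCentralizer.2 (hg.trans hge.symm)

lemma mul_unit_eq_mul_unit_iff (hx : IsIdempotentElem x) (hy : IsIdempotentElem y) :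
    x * (g : S) = y * h ↔ x = y ∧ h * g⁻¹ ∈ natconn y := by
  have hmove : x * (g : S) = y * h ↔ x = y * ((h * g⁻¹ : Sˣ) : S) := by
    rw [Units.val_mul, ← mul_assoc, Units.eq_mul_inv_iff_mul_eq]
  rw [hmove]
  generalize h * g⁻¹ = u
  refine ⟨fun hxy => ?_, fun ⟨hxy, hu⟩ => hxy.trans hu.symm⟩
  have hyx : y = x * (↑u⁻¹ : S) := Units.eq_mul_inv_iff_mul_eq u |>.2 hxy.symm
  have heq : x = y := by
    calc x = y * x := by rw [hxy, ← mul_assoc, hy.eq]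
      _ = x * y := (commute_of_isIdempotentElem hy hx).eq
      _ = y := by rw [hyx, ← mul_assoc, hx.eq]
  exact ⟨heq, by rw [mem_natconn, ← hxy, heq]⟩

lemma IsNatJoin.unitCentralizer_inf_le (he : IsIdempotentElem e) (hf : IsIdempotentElem f)
    (hj : IsNatJoin e f j) : unitCentralizer e ⊓ unitCentralizer f ≤ unitCentralizer j := by
  intro g hg
  have hj_idem := hj.isIdempotentElem he hf
  have hle := hj.natLe_conj hg.1 hg.2
  have hge : NatLe (g * j * (↑g⁻¹ : S)) j := by
    simpa [mul_assoc] using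
      (hj.natLe_conj (inv_mem hg.1) (inv_mem hg.2)).conj g
  exact mem_unitCentralizer_iff_conj_eq.2
    (hge.antisymm (isIdempotentElem_conj hj_idem g) hj_idem hle)

lemma NatLe.trans (hps : NatLe p s) (hst : NatLe s t) : NatLe p t := by
  obtain ⟨x, hx, rfl⟩ := hps
  obtain ⟨y, hy, rfl⟩ := hst
  exact ⟨x * y, isIdempotentElem_mul hx hy, (mul_assoc x y t).symm⟩

lemma IsNatJoin.mono_right {f₁ j₁ : S} (hj : IsNatJoin e f j) (hf : NatLe f f₁)
    (hj₁ : IsNatJoin e f₁ j₁) : NatLe j j₁ :=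
  hj.2.2 j₁ hj₁.1 (hf.trans hj₁.2.1)

lemma IsNatJoin.natLe_mul {e₁ f₁ j₁ j₂ : S} (he : IsIdempotentElem e)
    (hf : IsIdempotentElem f) (hj : IsNatJoin e f j) (hff₁ : NatLe f f₁) (hee₁ : NatLe e e₁)
    (hj₁ : IsNatJoin e f₁ j₁) (hj₂ : IsNatJoin e₁ f j₂) : NatLe j (j₁ * j₂) :=
  (hj.mono_right hff₁ hj₁).mul (hj.isIdempotentElem he hf) (hj.symm.mono_right hee₁ hj₂.symm)

lemma mul_natLe_left (he : IsIdempotentElem e) (hf : IsIdempotentElem f) : NatLe (e * f) e :=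
  ⟨f, hf, (commute_of_isIdempotentElem he hf).eq⟩

lemma NatLe.mul_left (he : IsIdempotentElem e) (hst : NatLe s t) : NatLe (e * s) (e * t) := by
  obtain ⟨x, hx, rfl⟩ := hst
  exact ⟨x, hx, (commute_of_isIdempotentElem he hx).left_comm t⟩

lemma mul_mul_mul_eq_of_mul_eq (he : IsIdempotentElem e) (hf : IsIdempotentElem f)
    (hfs : f * s = t) : e * f * (e * s) = e * t := by
  rw [(commute_of_isIdempotentElem hf he).mul_mul_mul_comm, he.eq, hfs]

lemma mem_Fef_iff (hp : IsIdempotentElem p) (hq : IsIdempotentElem q) (hpq : p * q = p) :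
    x ∈ Fef p q ↔ p * x = p ∧ q * x = x := by
  constructor
  · rintro ⟨s, hs, rfl⟩
    exact ⟨by rw [← mul_assoc, hpq, (natLe_iff_mul_eq hp).1 hs], by rw [← mul_assoc, hq.eq]⟩
  · rintro ⟨hpx, hqx⟩
    exact ⟨x, (natLe_iff_mul_eq hp).2 hpx, hqx⟩

lemma mul_mem_Fef (hp : IsIdempotentElem p) (hq : IsIdempotentElem q) (hpq : p * q = p)
    (hx : x ∈ Fef p q) (hy : y ∈ Fef p q) : x * y ∈ Fef p q := by
  rw [mem_Fef_iff hp hq hpq] at hx hy ⊢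
  exact ⟨by rw [← mul_assoc, hx.1, hy.1], by rw [← mul_assoc, hx.2]⟩

end InverseMonoid

namespace NatconnDualIso

variable {S : Type*} [InverseMonoid S] {e f j : S}

lemma natconn_le_iff (hθ : NatconnDualIso S) (he : IsIdempotentElem e)
    (hf : IsIdempotentElem f) : natconn f ≤ natconn e ↔ e * f = e :=
  (hθ.2.1 e f he hf).symm.trans (natLe_iff_mul_eq he)

lemma natconn_mul (hθ : NatconnDualIso S) (he : IsIdempotentElem e)
    (hf : IsIdempotentElem f) : natconn (e * f) = natconn e ⊔ natconn f := by
  have hef := isIdempotentElem_mul he hf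
  obtain ⟨h, hh, hh_sup⟩ := (hθ.2.2 e f he hf).1
  have hhe : h * e = h := (hθ.natconn_le_iff hh he).1 (le_sup_left.trans hh_sup.ge)
  have hhf : h * f = h := (hθ.natconn_le_iff hh hf).1 (le_sup_right.trans hh_sup.ge)
  refine le_antisymm ?_ (sup_le (natconn_anti (mul_natLe_left he hf)) (natconn_anti ⟨e, he, rfl⟩))
  rw [← hh_sup, hθ.natconn_le_iff hh hef, ← mul_assoc, hhe, hhf]

lemma natconn_join (hθ : NatconnDualIso S) (he : IsIdempotentElem e)
    (hf : IsIdempotentElem f) (hj : IsNatJoin e f j) : natconn j = natconn e ⊓ natconn f := by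
  obtain ⟨h, hh, hh_inf⟩ := (hθ.2.2 e f he hf).2
  refine le_antisymm (le_inf (natconn_anti hj.1) (natconn_anti hj.2.1)) ?_
  rw [← hh_inf]
  exact natconn_anti (hj.2.2 h ((hθ.2.1 e h he hh).2 (hh_inf.le.trans inf_le_left))
    ((hθ.2.1 f h hf hh).2 (hh_inf.le.trans inf_le_right)))

end NatconnDualIso

namespace Factorizable

variable {S : Type*} [InverseMonoid S] {p q s x : S}

lemma exists_eq_mul_of_mul_eq (hfact : Factorizable S) (hp : IsIdempotentElem p)
    (hps : p * s = p) :
    ∃ (m : S) (g : Sˣ), IsIdempotentElem m ∧ p * m = p ∧ g ∈ natconn p ∧ s = m * g := by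
  obtain ⟨m, -, hm, ⟨g, rfl⟩, rfl⟩ := hfact s
  have hpm : p * m * (g : S) = p * ((1 : Sˣ) : S) := by rw [mul_assoc, hps, Units.val_one, mul_one]
  obtain ⟨hpm, hg⟩ := (mul_unit_eq_mul_unit_iff (isIdempotentElem_mul hp hm) hp).1 hpm
  exact ⟨m, g, hm, hpm, by simpa using hg, rfl⟩

lemma exists_eq_mul_of_mem_Fef (hfact : Factorizable S) (hp : IsIdempotentElem p)
    (hq : IsIdempotentElem q) (hpq : p * q = p) (hx : x ∈ Fef p q) :
    ∃ (m : S) (g : Sˣ), IsIdempotentElem m ∧ m ∈ Fef p q ∧ g ∈ natconn p ∧ x = m * g := by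
  obtain ⟨hpx, hqx⟩ := (mem_Fef_iff hp hq hpq).1 hx
  obtain ⟨m, g, hm, hpm, hg, rfl⟩ := hfact.exists_eq_mul_of_mul_eq hp hpx
  rw [← mul_assoc, Units.mul_left_inj] at hqx
  exact ⟨m, g, hm, (mem_Fef_iff hp hq hpq).2 ⟨hpm, hqx⟩, hg, rfl⟩

lemma commute_of_mul_eq (hfact : Factorizable S) (hp : IsIdempotentElem p)
    (hq : IsIdempotentElem q) (hpq : natconn p ≤ unitCentralizer q) (hps : p * s = p) :
    Commute q s := by
  obtain ⟨m, g, hm, -, hg, rfl⟩ := hfact.exists_eq_mul_of_mul_eq hp hps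
  exact (commute_of_isIdempotentElem hq hm).mul_right (mem_unitCentralizer.1 (hpq hg))

lemma centralIn_upfilter_iff (hfact : Factorizable S) (hp : IsIdempotentElem p)
    (hq : IsIdempotentElem q) :
    CentralIn (upfilter p) q ↔ NatLe p q ∧ natconn p ≤ unitCentralizer q := by
  refine and_congr_right fun _ => ⟨fun h g hg => ?_, fun h s hs => ?_⟩
  · exact mem_unitCentralizer.2 (h g ((natLe_iff_mul_eq hp).2 hg))
  · exact hfact.commute_of_mul_eq hp hq h ((natLe_iff_mul_eq hp).1 hs)

end Factorizable

section Centrality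

variable {S : Type*} [InverseMonoid S]

lemma centralIn_upfilter_join (hfact : Factorizable S) {e f f₁ j j₁ : S}
    (he : IsIdempotentElem e) (hf : IsIdempotentElem f) (hf₁ : IsIdempotentElem f₁)
    (hcf : CentralIn (upfilter f) f₁) (hj : IsNatJoin e f j) (hj₁ : IsNatJoin e f₁ j₁) :
    CentralIn (upfilter j) j₁ := by
  rw [hfact.centralIn_upfilter_iff hf hf₁] at hcf
  rw [hfact.centralIn_upfilter_iff (hj.isIdempotentElem he hf) (hj₁.isIdempotentElem he hf₁)]
  refine ⟨hj.mono_right hcf.1 hj₁, ?_⟩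
  refine (le_inf ?_ ?_).trans (hj₁.unitCentralizer_inf_le he hf₁)
  · exact (natconn_anti hj.1).trans (natconn_le_unitCentralizer he)
  · exact (natconn_anti hj.2.1).trans hcf.2

lemma centralIn_upfilter_mul (hfact : Factorizable S) (hθ : NatconnDualIso S) {a j k : S}
    (ha : IsIdempotentElem a) (hj : IsIdempotentElem j) (hk : IsIdempotentElem k)
    (hja : natconn j ≤ unitCentralizer a) (hjk : CentralIn (upfilter j) k) :
    CentralIn (upfilter (a * j)) (a * k) := by
  have hak := isIdempotentElem_mul ha hk
  rw [hfact.centralIn_upfilter_iff hj hk] at hjk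
  rw [hfact.centralIn_upfilter_iff (isIdempotentElem_mul ha hj) hak, hθ.natconn_mul ha hj]
  refine ⟨hjk.1.mul_left ha, sup_le ?_ ?_⟩
  · exact (natconn_anti (mul_natLe_left ha hk)).trans (natconn_le_unitCentralizer hak)
  · exact (le_inf hja hjk.2).trans (unitCentralizer_inf_le_mul a k)

end Centrality

namespace SubIso

variable {S : Type*} [Mul S] {A B C : Set S}

lemma symm (hA : ∀ x ∈ A, ∀ y ∈ A, x * y ∈ A) (h : SubIso A B) : SubIso B A := by
  obtain ⟨φ, hφ, hφ_mul⟩ := h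
  rcases isEmpty_or_nonempty S with _ | _
  · exact ⟨id, by simp [Set.eq_empty_of_isEmpty], fun a => isEmptyElim a⟩
  have hinv := hφ.invOn_invFunOn
  refine ⟨Function.invFunOn φ A, hφ.symm hinv.symm, fun a ha b hb => ?_⟩
  obtain ⟨x, hx, rfl⟩ := hφ.surjOn ha
  obtain ⟨y, hy, rfl⟩ := hφ.surjOn hb
  rw [← hφ_mul x hx y hy, hinv.1 hx, hinv.1 hy, hinv.1 (hA x hx y hy)]

lemma trans (hAB : SubIso A B) (hBC : SubIso B C) : SubIso A C := by
  obtain ⟨φ, hφ, hφ_mul⟩ := hAB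
  obtain ⟨ψ, hψ, hψ_mul⟩ := hBC
  refine ⟨ψ ∘ φ, hψ.comp hφ, fun a ha b hb => ?_⟩
  simp only [Function.comp_apply, hφ_mul a ha b hb,
    hψ_mul _ (hφ.mapsTo ha) _ (hφ.mapsTo hb)]

end SubIso

section ModularLaw

open scoped Pointwise

variable {G : Type*} [Group G] {A B C D : Subgroup G}

lemma sup_inf_assoc_of_coe_sup_eq_mul (hAB : ((A ⊔ B : Subgroup G) : Set G) = A * B)
    (hAC : A ≤ C) : (A ⊔ B) ⊓ C = A ⊔ B ⊓ C := by
  refine le_antisymm (fun x hx => ?_) (le_inf (sup_le_sup_left inf_le_left A)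
    (sup_le hAC inf_le_right))
  have hx_mul : x ∈ (A : Set G) * (B ⊓ C : Subgroup G) := by
    rw [Subgroup.mul_inf_assoc A B C hAC, ← hAB]
    exact hx
  obtain ⟨a, ha, b, hb, rfl⟩ := hx_mul
  exact Subgroup.mul_mem_sup ha hb

lemma sup_inf_eq_of_le_normalizer (hD : D ≤ Subgroup.normalizer A) (hBD : B ≤ D)
    (hDA : D ⊓ A ≤ B) : (A ⊔ B) ⊓ D = B := by
  rw [sup_comm, sup_inf_assoc_of_coe_sup_eq_mul
    (Subgroup.coe_mul_of_left_le_normalizer_right B A (hBD.trans hD)) hBD, inf_comm,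
    sup_eq_left.2 hDA]

lemma sup_inf_eq_of_le_sup (hD : D ≤ Subgroup.normalizer A) (hAB : A ≤ B)
    (hB : B ≤ A ⊔ D) : A ⊔ B ⊓ D = B := by
  rw [inf_comm, ← sup_inf_assoc_of_coe_sup_eq_mul
    (Subgroup.coe_mul_of_right_le_normalizer_left A D hD) hAB, inf_eq_right.2 hB]

end ModularLaw

section SecondIsomorphism

open scoped Pointwise

variable {S : Type*} [InverseMonoid S] {a j n : S}

lemma mapsTo_mul_left_Fef (ha : IsIdempotentElem a) (hj : IsIdempotentElem j)
    (hn : IsIdempotentElem n) (hjn : j * n = j) :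
    Set.MapsTo (a * ·) (Fef j n) (Fef (a * j) (a * n)) := by
  intro x hx
  rw [mem_Fef_iff hj hn hjn] at hx
  rw [mem_Fef_iff (isIdempotentElem_mul ha hj) (isIdempotentElem_mul ha hn)
    (mul_mul_mul_eq_of_mul_eq ha hj hjn)]
  exact ⟨mul_mul_mul_eq_of_mul_eq ha hj hx.1, mul_mul_mul_eq_of_mul_eq ha hn hx.2⟩

lemma injOn_mul_left_Fef (hfact : Factorizable S) (hθ : NatconnDualIso S)
    (ha : IsIdempotentElem a) (hj : IsIdempotentElem j) (hn : IsIdempotentElem n)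
    (hjn : j * n = j) (hja : natconn j ≤ unitCentralizer a)
    (hinf : natconn j ⊓ natconn a ≤ natconn n) : Set.InjOn (a * ·) (Fef j n) := by
  have hrecover : ∀ m ∈ Fef j n, IsIdempotentElem m → natconn (a * m) ⊓ natconn j = natconn m := by
    intro m hm hm_idem
    obtain ⟨hjm, hnm⟩ := (mem_Fef_iff hj hn hjn).1 hm
    rw [(commute_of_isIdempotentElem hn hm_idem).eq] at hnm
    rw [hθ.natconn_mul ha hm_idem]
    exact sup_inf_eq_of_le_normalizer (hja.trans (unitCentralizer_le_normalizer_natconn a))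
      ((hθ.natconn_le_iff hj hm_idem).2 hjm)
      (hinf.trans ((hθ.natconn_le_iff hm_idem hn).2 hnm))
  intro x hx y hy hxy
  obtain ⟨m, g, hm, hmF, hg, rfl⟩ := hfact.exists_eq_mul_of_mem_Fef hj hn hjn hx
  obtain ⟨k, h, hk, hkF, hh, rfl⟩ := hfact.exists_eq_mul_of_mem_Fef hj hn hjn hy
  simp only [← mul_assoc] at hxy
  obtain ⟨hmk, hgh⟩ := (mul_unit_eq_mul_unit_iff (isIdempotentElem_mul ha hm)
    (isIdempotentElem_mul ha hk)).1 hxy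
  refine (mul_unit_eq_mul_unit_iff hm hk).2 ⟨hθ.1 m k hm hk ?_, ?_⟩
  · rw [← hrecover m hmF hm, hmk, hrecover k hkF hk]
  · rw [← hrecover k hkF hk]
    exact ⟨hgh, (natconn j).mul_mem hh ((natconn j).inv_mem hg)⟩

lemma exists_isIdempotentElem_mem_Fef_mul_left_eq (hθ : NatconnDualIso S) {h : S}
    (ha : IsIdempotentElem a) (hj : IsIdempotentElem j) (hn : IsIdempotentElem n)
    (hjn : j * n = j) (hja : natconn j ≤ unitCentralizer a) (hh : IsIdempotentElem h)
    (hhF : h ∈ Fef (a * j) (a * n)) :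
    ∃ m ∈ Fef j n, IsIdempotentElem m ∧ a * m = h := by
  have haj := isIdempotentElem_mul ha hj
  have han := isIdempotentElem_mul ha hn
  obtain ⟨hajh, hanh⟩ := (mem_Fef_iff haj han (mul_mul_mul_eq_of_mul_eq ha hj hjn)).1 hhF
  rw [(commute_of_isIdempotentElem han hh).eq] at hanh
  have hle_sup := (hθ.natconn_le_iff haj hh).2 hajh
  have hsup_le := (hθ.natconn_le_iff hh han).2 hanh
  rw [hθ.natconn_mul ha hj] at hle_sup
  rw [hθ.natconn_mul ha hn] at hsup_le
  obtain ⟨m, hm, hm_inf⟩ := (hθ.2.2 h j hh hj).2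
  have hjm : j * m = j := (hθ.natconn_le_iff hj hm).1 (hm_inf.le.trans inf_le_right)
  have hmn : m * n = m := (hθ.natconn_le_iff hm hn).1 <| by
    rw [hm_inf]
    exact le_inf (le_sup_right.trans hsup_le) ((hθ.natconn_le_iff hj hn).2 hjn)
  refine ⟨m, (mem_Fef_iff hj hn hjn).2 ⟨hjm, ?_⟩, hm, hθ.1 _ _ (isIdempotentElem_mul ha hm) hh ?_⟩
  · rw [(commute_of_isIdempotentElem hn hm).eq, hmn]
  · rw [hθ.natconn_mul ha hm, hm_inf]
    exact sup_inf_eq_of_le_sup (hja.trans (unitCentralizer_le_normalizer_natconn a))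
      (le_sup_left.trans hsup_le) hle_sup

lemma surjOn_mul_left_Fef (hfact : Factorizable S) (hθ : NatconnDualIso S)
    (ha : IsIdempotentElem a) (hj : IsIdempotentElem j) (hn : IsIdempotentElem n)
    (hjn : j * n = j) (hja : natconn j ≤ unitCentralizer a) :
    Set.SurjOn (a * ·) (Fef j n) (Fef (a * j) (a * n)) := by
  have hD := hja.trans (unitCentralizer_le_normalizer_natconn a)
  intro y hy
  obtain ⟨h, g, hh, hhF, hg, rfl⟩ := hfact.exists_eq_mul_of_mem_Fef (isIdempotentElem_mul ha hj)
    (isIdempotentElem_mul ha hn) (mul_mul_mul_eq_of_mul_eq ha hj hjn) hy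
  obtain ⟨m, hmF, hm, rfl⟩ :=
    exists_isIdempotentElem_mem_Fef_mul_left_eq hθ ha hj hn hjn hja hh hhF
  obtain ⟨b, hb, d, hd, rfl⟩ : g ∈ (natconn a : Set Sˣ) * natconn j := by
    rw [← Subgroup.coe_mul_of_right_le_normalizer_left _ _ hD, ← hθ.natconn_mul ha hj]
    exact hg
  have hamb : a * m * (b : S) = a * m := natconn_anti (mul_natLe_left ha hm) hb
  obtain ⟨hjm, hnm⟩ := (mem_Fef_iff hj hn hjn).1 hmF
  refine ⟨m * (d : S), (mem_Fef_iff hj hn hjn).2 ⟨?_, ?_⟩, ?_⟩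
  · rw [← mul_assoc, hjm, mem_natconn.1 hd]
  · rw [← mul_assoc, hnm]
  · calc a * (m * d) = a * m * b * d := by rw [hamb, mul_assoc]
      _ = a * m * ((b * d : Sˣ) : S) := by rw [Units.val_mul, ← mul_assoc (a * m)]

lemma subIso_Fef_mul_left (hfact : Factorizable S) (hθ : NatconnDualIso S)
    (ha : IsIdempotentElem a) (hj : IsIdempotentElem j) (hn : IsIdempotentElem n)
    (hjn : j * n = j) (hja : natconn j ≤ unitCentralizer a)
    (hinf : natconn j ⊓ natconn a ≤ natconn n) :
    SubIso (Fef j n) (Fef (a * j) (a * n)) := by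
  refine ⟨(a * ·), ⟨mapsTo_mul_left_Fef ha hj hn hjn,
    injOn_mul_left_Fef hfact hθ ha hj hn hjn hja hinf,
    surjOn_mul_left_Fef hfact hθ ha hj hn hjn hja⟩, fun x hx y _ => ?_⟩
  have hax : Commute a x :=
    hfact.commute_of_mul_eq hj ha hja ((mem_Fef_iff hj hn hjn).1 hx).1
  rw [hax.symm.mul_mul_mul_comm, ha.eq]

end SecondIsomorphism

section Zassenhaus

variable {S : Type*} [InverseMonoid S] {e₁ e f₁ f j j₁ j₂ : S}

lemma centralIn_upfilter_mul_join (hfact : Factorizable S) (hθ : NatconnDualIso S)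
    (he₁ : IsIdempotentElem e₁) (he : IsIdempotentElem e)
    (hf₁ : IsIdempotentElem f₁) (hf : IsIdempotentElem f)
    (hce : CentralIn (upfilter e) e₁) (hcf : CentralIn (upfilter f) f₁)
    (hj : IsNatJoin e f j) (hj₁ : IsNatJoin e f₁ j₁) :
    CentralIn (upfilter (e₁ * j)) (e₁ * j₁) := by
  rw [hfact.centralIn_upfilter_iff he he₁] at hce
  exact centralIn_upfilter_mul hfact hθ he₁ (hj.isIdempotentElem he hf)
    (hj₁.isIdempotentElem he hf₁) ((natconn_anti hj.1).trans hce.2)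
    (centralIn_upfilter_join hfact he hf hf₁ hcf hj hj₁)

lemma subIso_Fef_mul_join (hfact : Factorizable S) (hθ : NatconnDualIso S)
    (he₁ : IsIdempotentElem e₁) (he : IsIdempotentElem e)
    (hf₁ : IsIdempotentElem f₁) (hf : IsIdempotentElem f)
    (hce : CentralIn (upfilter e) e₁) (hff₁ : NatLe f f₁)
    (hj : IsNatJoin e f j) (hj₁ : IsNatJoin e f₁ j₁) (hj₂ : IsNatJoin e₁ f j₂) :
    SubIso (Fef j (j₁ * j₂)) (Fef (e₁ * j) (e₁ * j₁)) := by
  have hj_idem := hj.isIdempotentElem he hf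
  have hj₁_idem := hj₁.isIdempotentElem he hf₁
  have hj₂_idem := hj₂.isIdempotentElem he₁ hf
  rw [hfact.centralIn_upfilter_iff he he₁] at hce
  have hjj₁j₂ : j * (j₁ * j₂) = j :=
    (natLe_iff_mul_eq hj_idem).1 (hj.natLe_mul he hf hff₁ hce.1 hj₁ hj₂)
  have he₁j₁j₂ : e₁ * (j₁ * j₂) = e₁ * j₁ := by
    rw [(commute_of_isIdempotentElem hj₁_idem hj₂_idem).eq, ← mul_assoc,
      (natLe_iff_mul_eq he₁).1 hj₂.1]
  rw [← he₁j₁j₂]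
  refine subIso_Fef_mul_left hfact hθ he₁ hj_idem (isIdempotentElem_mul hj₁_idem hj₂_idem)
    hjj₁j₂ ((natconn_anti hj.1).trans hce.2) ?_
  calc natconn j ⊓ natconn e₁ ≤ natconn e₁ ⊓ natconn f :=
        le_inf inf_le_right (inf_le_left.trans (natconn_anti hj.2.1))
    _ = natconn j₂ := (hθ.natconn_join he₁ hf hj₂).symm
    _ ≤ natconn (j₁ * j₂) := natconn_anti ⟨j₁, hj₁_idem, rfl⟩

end Zassenhaus

/-- In a factorizable inverse monoid whose natural connection is a dual
isomorphism onto a sublattice of the lattice of subgroups of the group of units: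
if `e₁` is central in `e↑`, `f₁` is central in `f↑`, and the joins `e ∨ f`, `e ∨ f₁`,
`e₁ ∨ f` exist, then `e₁(e∨f₁)` is central in `(e₁(e∨f))↑`, `f₁(e₁∨f)` is central in
`(f₁(e∨f))↑`, and `F_{e₁(e∨f), e₁(e∨f₁)} ≅ F_{f₁(e∨f), f₁(e₁∨f)}`. -/
theorem stmt_7 {S : Type*} [InverseMonoid S] (hfact : Factorizable S)
    (hθ : NatconnDualIso S) (e₁ e f₁ f j j₁ j₂ : S)
    (he₁ : IsIdempotentElem e₁) (he : IsIdempotentElem e)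
    (hf₁ : IsIdempotentElem f₁) (hf : IsIdempotentElem f)
    (hce : CentralIn (upfilter e) e₁) (hcf : CentralIn (upfilter f) f₁)
    (hj : IsNatJoin e f j) (hj₁ : IsNatJoin e f₁ j₁) (hj₂ : IsNatJoin e₁ f j₂) :
    CentralIn (upfilter (e₁ * j)) (e₁ * j₁) ∧
    CentralIn (upfilter (f₁ * j)) (f₁ * j₂) ∧
    SubIso (Fef (e₁ * j) (e₁ * j₁)) (Fef (f₁ * j) (f₁ * j₂)) := by
  have hj_idem := hj.isIdempotentElem he hf
  have hmid_idem : IsIdempotentElem (j₁ * j₂) :=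
    isIdempotentElem_mul (hj₁.isIdempotentElem he hf₁) (hj₂.isIdempotentElem he₁ hf)
  have hj_mid : j * (j₁ * j₂) = j :=
    (natLe_iff_mul_eq hj_idem).1 (hj.natLe_mul he hf hcf.1 hce.1 hj₁ hj₂)
  have hmid_comm : j₂ * j₁ = j₁ * j₂ :=
    commute_of_isIdempotentElem (hj₂.isIdempotentElem he₁ hf) (hj₁.isIdempotentElem he hf₁)
  have hE : SubIso (Fef j (j₁ * j₂)) (Fef (e₁ * j) (e₁ * j₁)) :=
    subIso_Fef_mul_join hfact hθ he₁ he hf₁ hf hce hcf.1 hj hj₁ hj₂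
  have hF : SubIso (Fef j (j₁ * j₂)) (Fef (f₁ * j) (f₁ * j₂)) := hmid_comm ▸
    subIso_Fef_mul_join hfact hθ hf₁ hf he₁ he hcf hce.1 hj.symm hj₂.symm hj₁.symm
  exact ⟨centralIn_upfilter_mul_join hfact hθ he₁ he hf₁ hf hce hcf hj hj₁,
    centralIn_upfilter_mul_join hfact hθ hf₁ hf he₁ he hcf hce hj.symm hj₂.symm,
    (hE.symm fun _ hx _ hy => mul_mem_Fef hj_idem hmid_idem hj_mid hx hy).trans hF⟩
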